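/- arXiv:2502.08991 — 2 statements merged into one kernel-verified Lean document; each statement's English description precedes it below -/
import Mathlib

section
/- Let S be a finite nonempty set and let P and Q be probability distributions on S whose total variation distance is TV(P,Q) = c > 0. Let δ ∈ (0,1) and let n be a positive integer with n ≥ 2·ln(1/δ)/c². Then there exists a test ψ : Sⁿ → {0,1} such that: if X₁,…,Xₙ are drawn i.i.d. from P then Pr[ψ(X₁,…,Xₙ) = 0] ≥ 1 − δ, and if X₁,…,Xₙ are drawn i.i.d. from Q then Pr[ψ(X₁,…,Xₙ) = 1] ≥ 1 − δ. -/
/-!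
The test is the likelihood comparison `ψ x = 1 ↔ ∏ P (x i) ≤ ∏ Q (x i)`. On either error event the
weight of the sample under the true distribution is at most its weight under the other one, hence at
most the geometric mean of the two. Summing over `Sⁿ`, each error probability is at most `B ^ n`,
where `B = ∑ √(P s) √(Q s)` is the Bhattacharyya coefficient (`iidProb_ge_of_compl_le`).

Since `|P - Q| = |√P - √Q| (√P + √Q)`, Cauchy–Schwarz gives
`(2 c)² ≤ (2 - 2 B)(2 + 2 B)`, that is `B² ≤ 1 - c² ≤ exp (-c²)` (`bhattacharyya_sq_le`), so
`B ^ n ≤ exp (-n c² / 2) ≤ δ`.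
-/

open Finset

noncomputable section

/-- `P` is a probability distribution on the finite set `S`. -/
def IsPMF {S : Type*} [Fintype S] (P : S → ℝ) : Prop :=
  (∀ s, 0 ≤ P s) ∧ ∑ s, P s = 1

/-- Total variation distance between two distributions on a finite set. -/
def TV {S : Type*} [Fintype S] (P Q : S → ℝ) : ℝ :=
  (1 / 2) * ∑ s, |P s - Q s|

/-- Probability of the event `E` under `n` i.i.d. samples from `P`,
i.e. under the product distribution on `Sⁿ`. -/
def iidProb {S : Type*} [Fintype S] (P : S → ℝ) {n : ℕ}
    (E : (Fin n → S) → Prop) : ℝ :=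
  ∑ x : Fin n → S, Set.indicator {x | E x} (fun x => ∏ i, P (x i)) x

/-- The Bhattacharyya coefficient `∑ √(P s) √(Q s)` of two distributions on a finite set. -/
def bhattacharyya {S : Type*} [Fintype S] (P Q : S → ℝ) : ℝ :=
  ∑ s, √(P s) * √(Q s)

lemma bhattacharyya_comm {S : Type*} [Fintype S] (P Q : S → ℝ) :
    bhattacharyya P Q = bhattacharyya Q P := by
  simp only [bhattacharyya, mul_comm]

lemma bhattacharyya_sq_le {S : Type*} [Fintype S] {P Q : S → ℝ}
    (hP : IsPMF P) (hQ : IsPMF Q) : bhattacharyya P Q ^ 2 ≤ 1 - TV P Q ^ 2 := by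
  obtain ⟨hP0, hP1⟩ := hP
  obtain ⟨hQ0, hQ1⟩ := hQ
  have hcs := Finset.sum_mul_sq_le_sq_mul_sq (univ : Finset S)
    (fun s => |√(P s) - √(Q s)|) (fun s => √(P s) + √(Q s))
  have habs : ∑ s, |√(P s) - √(Q s)| * (√(P s) + √(Q s)) = 2 * TV P Q := by
    have : ∀ s, |√(P s) - √(Q s)| * (√(P s) + √(Q s)) = |P s - Q s| := by
      intro s
      rw [← abs_of_nonneg (add_nonneg (Real.sqrt_nonneg (P s)) (Real.sqrt_nonneg (Q s))),
        ← abs_mul]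
      congr 1
      linear_combination Real.sq_sqrt (hP0 s) - Real.sq_sqrt (hQ0 s)
    simp only [this, TV]
    ring
  have hminus : ∑ s, |√(P s) - √(Q s)| ^ 2 = 2 - 2 * bhattacharyya P Q := by
    have : ∀ s, |√(P s) - √(Q s)| ^ 2 = P s + Q s - 2 * (√(P s) * √(Q s)) := by
      intro s
      rw [sq_abs]
      linear_combination Real.sq_sqrt (hP0 s) + Real.sq_sqrt (hQ0 s)
    simp only [this, sum_sub_distrib, sum_add_distrib, hP1, hQ1, ← mul_sum, bhattacharyya]
    ring
  have hplus : ∑ s, (√(P s) + √(Q s)) ^ 2 = 2 + 2 * bhattacharyya P Q := by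
    have : ∀ s, (√(P s) + √(Q s)) ^ 2 = P s + Q s + 2 * (√(P s) * √(Q s)) := by
      intro s
      linear_combination Real.sq_sqrt (hP0 s) + Real.sq_sqrt (hQ0 s)
    simp only [this, sum_add_distrib, hP1, hQ1, ← mul_sum, bhattacharyya]
    ring
  rw [habs, hminus, hplus] at hcs
  linarith

/-- If every sample outside `E` is at most as likely under `P` as under `Q`, then the complement of
`E` has probability at most the `n`-th power of the Bhattacharyya coefficient under `P`. -/
lemma iidProb_ge_of_compl_le {S : Type*} [Fintype S] {P Q : S → ℝ}
    (hP : IsPMF P) (hQ : IsPMF Q) {n : ℕ} (E : (Fin n → S) → Prop)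
    (hE : ∀ x, ¬ E x → ∏ i, P (x i) ≤ ∏ i, Q (x i)) :
    iidProb P E ≥ 1 - bhattacharyya P Q ^ n := by
  have htot : ∑ x : Fin n → S, ∏ i, P (x i) = 1 := by
    rw [← Fintype.sum_pow, hP.2, one_pow]
  rw [ge_iff_le, sub_le_iff_le_add, ← htot, bhattacharyya, Fintype.sum_pow, iidProb,
    ← sum_add_distrib]
  refine sum_le_sum fun x _ => ?_
  have hgeom : 0 ≤ ∏ i, √(P (x i)) * √(Q (x i)) := prod_nonneg fun i _ => by positivity
  by_cases hx : E x
  · simpa [Set.indicator, hx] using hgeom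
  · have hsqP : (∏ i, √(P (x i))) * ∏ i, √(P (x i)) = ∏ i, P (x i) := by
      rw [← prod_mul_distrib]
      exact prod_congr rfl fun i _ => Real.mul_self_sqrt (hP.1 _)
    have hsqQ : (∏ i, √(Q (x i))) * ∏ i, √(Q (x i)) = ∏ i, Q (x i) := by
      rw [← prod_mul_distrib]
      exact prod_congr rfl fun i _ => Real.mul_self_sqrt (hQ.1 _)
    have hp : 0 ≤ ∏ i, √(P (x i)) := prod_nonneg fun i _ => Real.sqrt_nonneg _
    have hq : 0 ≤ ∏ i, √(Q (x i)) := prod_nonneg fun i _ => Real.sqrt_nonneg _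
    have hle := hE x hx
    rw [← hsqP, ← hsqQ] at hle
    have hle' := (mul_self_le_mul_self_iff hp hq).mpr hle
    simp only [Set.indicator, Set.mem_setOf_eq, hx, if_false, zero_add]
    rw [← hsqP, prod_mul_distrib]
    exact mul_le_mul_of_nonneg_left hle' hp

/-- **Non-asymptotic discrimination of two distributions.**  If `TV(P,Q) = c > 0`
and `n ≥ 2 ln(1/δ)/c²`, there is a test `ψ : Sⁿ → {0,1}` which outputs `0` with
probability at least `1 - δ` on i.i.d. samples from `P`, and outputs `1` with
probability at least `1 - δ` on i.i.d. samples from `Q`. -/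
theorem stmt0 {S : Type*} [Fintype S] [Nonempty S] (P Q : S → ℝ)
    (hP : IsPMF P) (hQ : IsPMF Q) (c : ℝ) (hc : 0 < c) (hTV : TV P Q = c)
    (δ : ℝ) (hδ0 : 0 < δ) (hδ1 : δ < 1)
    (n : ℕ) (hn : 0 < n) (hn2 : (n : ℝ) ≥ 2 * Real.log (1 / δ) / c ^ 2) :
    ∃ ψ : (Fin n → S) → Bool,
      iidProb P (fun x => ψ x = false) ≥ 1 - δ ∧
      iidProb Q (fun x => ψ x = true) ≥ 1 - δ := by
  have hB : bhattacharyya P Q ^ n ≤ δ := by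
    have hB0 : 0 ≤ bhattacharyya P Q := sum_nonneg fun s _ => by positivity
    have hBexp : bhattacharyya P Q ≤ Real.exp (-c ^ 2 / 2) := by
      refine (sq_le_sq₀ hB0 (Real.exp_pos _).le).mp ?_
      have h1 := bhattacharyya_sq_le hP hQ
      rw [hTV] at h1
      have h2 := Real.add_one_le_exp (-c ^ 2)
      rw [← Real.exp_nat_mul]
      have h3 : ((2 : ℕ) : ℝ) * (-c ^ 2 / 2) = -c ^ 2 := by push_cast; ring
      rw [h3]
      linarith
    calc bhattacharyya P Q ^ n ≤ Real.exp (-c ^ 2 / 2) ^ n := by gcongr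
      _ = Real.exp (n * (-c ^ 2 / 2)) := (Real.exp_nat_mul _ _).symm
      _ ≤ Real.exp (Real.log δ) := by
        apply Real.exp_le_exp.mpr
        rw [ge_iff_le, div_le_iff₀ (by positivity), one_div, Real.log_inv] at hn2
        linarith
      _ = δ := Real.exp_log hδ0
  classical
  refine ⟨fun x => decide (∏ i, P (x i) ≤ ∏ i, Q (x i)), ?_, ?_⟩
  · have := iidProb_ge_of_compl_le hP hQ
      (fun x : Fin n → S => decide (∏ i, P (x i) ≤ ∏ i, Q (x i)) = false)
      (fun x hx => by simpa using hx)
    linarith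
  · have := iidProb_ge_of_compl_le hQ hP
      (fun x : Fin n → S => decide (∏ i, P (x i) ≤ ∏ i, Q (x i)) = true)
      (fun x hx => by
        rw [decide_eq_true_iff, not_le] at hx
        exact hx.le)
    rw [bhattacharyya_comm] at this
    linarith

end
end

section
/- Let S be a finite set, let Q₁,…,Q_m be probability distributions on S, and suppose the true distribution P equals Q_{j*} for some j* ∈ {1,…,m}, and that TV(P, Q_i) ≥ c > 0 for every i with Q_i ≠ P. Then there exists a selection rule σ : Sⁿ → {1,…,m} such that, for X₁,…,Xₙ drawn i.i.d. from P, Pr[Q_{σ(X₁,…,Xₙ)} ≠ P] ≤ m·e^{−c²·n/2}. -/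
/-!
The rule is maximum likelihood: `σ x` maximises `∏ i, Q j (x i)` over `j`. It depends only on the
family `Q` and on `n`, not on the unknown `P`; `exists_uniform_selector` records this uniform form,
which is stronger than `stmt9`, where `P` is quantified before the rule.

If the rule errs at `x` by picking `j`, then the likelihood of `P` at `x` is at most that of `Q j`,
hence at most their geometric mean `∏ i, √(P (x i) * Q j (x i))`. Summed over all `x`, this is
`B ^ n` with `B = ∑ s, √(P s * Q j s)` the Bhattacharyya coefficient, and
`B ≤ exp (-TV P (Q j) ^ 2 / 2)` by Cauchy–Schwarz (`bhattacharyya_le`). A union bound over `j`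
concludes.
-/

open Finset

noncomputable section

/-- Cauchy–Schwarz applied to `|p - q| = |√p - √q| * (√p + √q)` gives `TV² ≤ 1 - B²` for the
Bhattacharyya coefficient `B = ∑ s, √(P s * Q s)`; then `1 - t ≤ exp (-t)`. -/
lemma bhattacharyya_le {S : Type*} [Fintype S] {P Q : S → ℝ} (hP : IsPMF P) (hQ : IsPMF Q) :
    ∑ s, √(P s * Q s) ≤ Real.exp (-TV P Q ^ 2 / 2) := by
  obtain ⟨hP0, hP1⟩ := hP
  obtain ⟨hQ0, hQ1⟩ := hQ
  set B := ∑ s, √(P s * Q s) with hB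
  have hcs := Finset.sum_mul_sq_le_sq_mul_sq Finset.univ
    (fun s => |√(P s) - √(Q s)|) (fun s => √(P s) + √(Q s))
  have h1 : ∑ s, |√(P s) - √(Q s)| * (√(P s) + √(Q s)) = 2 * TV P Q := by
    have h (s : S) : |√(P s) - √(Q s)| * (√(P s) + √(Q s)) = |P s - Q s| := by
      rw [← abs_of_nonneg (add_nonneg (Real.sqrt_nonneg (P s)) (Real.sqrt_nonneg (Q s))),
        ← abs_mul]
      congr 1
      linear_combination Real.sq_sqrt (hP0 s) - Real.sq_sqrt (hQ0 s)
    simp only [h, TV]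
    ring
  have h2 : ∑ s, |√(P s) - √(Q s)| ^ 2 = 2 - 2 * B := by
    have h (s : S) : |√(P s) - √(Q s)| ^ 2 = P s + Q s - 2 * √(P s * Q s) := by
      rw [sq_abs, Real.sqrt_mul (hP0 s)]
      linear_combination Real.sq_sqrt (hP0 s) + Real.sq_sqrt (hQ0 s)
    simp only [h, Finset.sum_sub_distrib, Finset.sum_add_distrib, ← Finset.mul_sum, hP1, hQ1, hB]
    ring
  have h3 : ∑ s, (√(P s) + √(Q s)) ^ 2 = 2 + 2 * B := by
    have h (s : S) : (√(P s) + √(Q s)) ^ 2 = P s + Q s + 2 * √(P s * Q s) := by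
      rw [Real.sqrt_mul (hP0 s)]
      linear_combination Real.sq_sqrt (hP0 s) + Real.sq_sqrt (hQ0 s)
    simp only [h, Finset.sum_add_distrib, ← Finset.mul_sum, hP1, hQ1, hB]
    ring
  rw [h1, h2, h3] at hcs
  refine le_of_abs_le (abs_le_of_sq_le_sq ?_ (Real.exp_pos _).le)
  rw [← Real.exp_nat_mul]
  have h4 := Real.add_one_le_exp (-TV P Q ^ 2)
  have h5 : ((2 : ℕ) : ℝ) * (-TV P Q ^ 2 / 2) = -TV P Q ^ 2 := by push_cast; ring
  rw [h5]
  nlinarith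

/-- Maximum likelihood selection, with a rule chosen before the true distribution `P` and the
separation `c`. -/
theorem exists_uniform_selector {S : Type*} [Fintype S] (m : ℕ) [Nonempty (Fin m)]
    (Q : Fin m → S → ℝ) (hQ : ∀ i, IsPMF (Q i)) (n : ℕ) :
    ∃ σ : (Fin n → S) → Fin m, ∀ P : S → ℝ, (∃ j, Q j = P) → ∀ c : ℝ, 0 < c →
      (∀ i, Q i ≠ P → c ≤ TV P (Q i)) →
      iidProb P (fun x => Q (σ x) ≠ P) ≤ m * Real.exp (-c ^ 2 * n / 2) := by
  choose σ hσ using fun x : Fin n → S => Finite.exists_max fun j => ∏ i, Q j (x i)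
  refine ⟨σ, ?_⟩
  rintro P ⟨j, rfl⟩ c hc hsep
  have hQ0 (k : Fin m) (s : S) : 0 ≤ Q k s := (hQ k).1 s
  classical
  let W : Finset (Fin m) := Finset.univ.filter fun k => Q k ≠ Q j
  have hpoint (x : Fin n → S) :
      Set.indicator {x | Q (σ x) ≠ Q j} (fun x => ∏ i, Q j (x i)) x
        ≤ ∑ k ∈ W, ∏ i, √(Q j (x i) * Q k (x i)) := by
    have hnn : ∀ k ∈ W, 0 ≤ ∏ i, √(Q j (x i) * Q k (x i)) := fun k _ =>
      Finset.prod_nonneg fun i _ => Real.sqrt_nonneg _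
    by_cases hx : Q (σ x) ≠ Q j
    · rw [Set.indicator_of_mem (by exact hx)]
      refine le_trans ?_ (Finset.single_le_sum hnn (show σ x ∈ W by simp [W, hx]))
      refine le_of_abs_le (abs_le_of_sq_le_sq ?_ (hnn (σ x) (by simp [W, hx])))
      have hsq : (∏ i, √(Q j (x i) * Q (σ x) (x i))) ^ 2
          = (∏ i, Q j (x i)) * ∏ i, Q (σ x) (x i) := by
        rw [← Finset.prod_pow, ← Finset.prod_mul_distrib]
        exact Finset.prod_congr rfl fun i _ => Real.sq_sqrt (mul_nonneg (hQ0 _ _) (hQ0 _ _))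
      rw [hsq, sq]
      exact mul_le_mul_of_nonneg_left (hσ x j) (Finset.prod_nonneg fun i _ => hQ0 _ _)
    · rw [Set.indicator_of_notMem (by exact hx)]
      exact Finset.sum_nonneg hnn
  have hpow : ∀ k ∈ W, ∑ x : Fin n → S, ∏ i, √(Q j (x i) * Q k (x i))
      ≤ Real.exp (-c ^ 2 * n / 2) := by
    intro k hk
    have hk' : c ≤ TV (Q j) (Q k) := hsep k (by simpa [W] using hk)
    rw [← Fintype.sum_pow (fun s => √(Q j s * Q k s)) n]
    have hB : ∑ s, √(Q j s * Q k s) ≤ Real.exp (-c ^ 2 / 2) :=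
      (bhattacharyya_le (hQ j) (hQ k)).trans (Real.exp_le_exp.mpr (by nlinarith))
    calc (∑ s, √(Q j s * Q k s)) ^ n ≤ Real.exp (-c ^ 2 / 2) ^ n :=
          pow_le_pow_left₀ (Finset.sum_nonneg fun s _ => Real.sqrt_nonneg _) hB n
      _ = Real.exp (-c ^ 2 * n / 2) := by
          rw [← Real.exp_nat_mul]
          congr 1
          ring
  calc iidProb (Q j) (fun x => Q (σ x) ≠ Q j)
      ≤ ∑ x : Fin n → S, ∑ k ∈ W, ∏ i, √(Q j (x i) * Q k (x i)) :=
        Finset.sum_le_sum fun x _ => hpoint x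
    _ = ∑ k ∈ W, ∑ x : Fin n → S, ∏ i, √(Q j (x i) * Q k (x i)) := Finset.sum_comm
    _ ≤ W.card • Real.exp (-c ^ 2 * n / 2) := Finset.sum_le_card_nsmul _ _ _ hpow
    _ ≤ m * Real.exp (-c ^ 2 * n / 2) := by
        rw [nsmul_eq_mul]
        have hcard : W.card ≤ m := by simpa using Finset.card_le_univ W
        gcongr

/-- **Selection among finitely many hypotheses.** If the true distribution `P`
is one of `Q₁,…,Q_m` and every wrong hypothesis is at total variation distance
at least `c` from `P`, then there is a selection rule `σ : Sⁿ → {1,…,m}` that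
picks a wrong hypothesis with probability at most `m·e^{-c²n/2}`. -/
theorem stmt9 {S : Type*} [Fintype S] (m : ℕ) (Q : Fin m → S → ℝ)
    (hQ : ∀ i, IsPMF (Q i)) (P : S → ℝ) (hP : IsPMF P)
    (hmem : ∃ j, Q j = P)
    (c : ℝ) (hc : 0 < c) (hsep : ∀ i, Q i ≠ P → c ≤ TV P (Q i))
    (n : ℕ) :
    ∃ σ : (Fin n → S) → Fin m,
      iidProb P (fun x => Q (σ x) ≠ P) ≤ m * Real.exp (-c ^ 2 * n / 2) := by
  haveI : Nonempty (Fin m) := ⟨hmem.choose⟩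
  obtain ⟨σ, hσ⟩ := exists_uniform_selector m Q hQ n
  exact ⟨σ, hσ P hmem c hc hsep⟩

end
end
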